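/- Let k be a positive integer, h, w, wˡ ∈ ℂᵏ, and let a > 0 and aˡ > 0 be real numbers. Set b := |hᴴ w|², bˡ := |hᴴ wˡ|², and v := 2 Re[ conj(hᴴ wˡ) · (hᴴ w) ] − bˡ. Assume bˡ > 0 and v > 0. Then the achievable-rate expression satisfies the concave lower bound ln(1 + b/a) ≥ ln(1 + bˡ/aˡ) − ((bˡ)² / (aˡ (aˡ + bˡ))) · ( a/v − aˡ/bˡ ). -/

import Mathlib

/-- The tangent line of the convex function `x ↦ ln (1 + 1/x)` at `y > 0` lies below its graph. -/
theorem log_one_add_inv_ge_tangent {x y : ℝ} (hx : 0 < x) (hy : 0 < y) :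
    Real.log (1 + y⁻¹) - (x - y) / (y * (y + 1)) ≤ Real.log (1 + x⁻¹) := by
  have hlog : Real.log (1 + y⁻¹) - Real.log (1 + x⁻¹) ≤ (1 + y⁻¹) / (1 + x⁻¹) - 1 := by
    rw [← Real.log_div (by positivity) (by positivity)]
    exact Real.log_le_sub_one_of_pos (by positivity)
  have hgap : (x - y) / (y * (y + 1)) - ((1 + y⁻¹) / (1 + x⁻¹) - 1) =
      (x - y) ^ 2 / (y * (y + 1) * (x + 1)) := by
    field_simp
    ring
  have hnonneg : 0 ≤ (x - y) ^ 2 / (y * (y + 1) * (x + 1)) := by positivity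
  linarith

/-- The first-order linearization of `|z|²` around `u` is a global lower bound. -/
theorem two_mul_re_conj_mul_sub_normSq_le (u z : ℂ) :
    2 * ((starRingEnd ℂ) u * z).re - Complex.normSq u ≤ Complex.normSq z := by
  simp only [Complex.mul_re, Complex.conj_re, Complex.conj_im, Complex.normSq_apply]
  nlinarith [sq_nonneg (z.re - u.re), sq_nonneg (z.im - u.im)]

/-- Inner approximation of the achievable rate `ln(1 + b/a)` (paper, Lemma 2):
with `b = |hᴴw|²`, `bˡ = |hᴴwˡ|²` and the linearization
`v = 2 Re[conj(hᴴwˡ)(hᴴw)] − bˡ > 0`, the rate is lower bounded by the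
concave surrogate. -/
theorem stmt_3 (k : ℕ) (hk : 0 < k) (h w wl : Fin k → ℂ) (a al : ℝ)
    (ha : 0 < a) (hal : 0 < al) (b bl v : ℝ)
    (hb : b = Complex.normSq (∑ i, star (h i) * w i))
    (hbl : bl = Complex.normSq (∑ i, star (h i) * wl i))
    (hv : v = 2 * ((starRingEnd ℂ) (∑ i, star (h i) * wl i) * (∑ i, star (h i) * w i)).re - bl)
    (hblpos : 0 < bl) (hvpos : 0 < v) :
    Real.log (1 + b / a) ≥
      Real.log (1 + bl / al) - (bl ^ 2 / (al * (al + bl))) * (a / v - al / bl) := by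
  have hvb : v ≤ b := by
    rw [hv, hb, hbl]
    exact two_mul_re_conj_mul_sub_normSq_le _ _
  have htangent := log_one_add_inv_ge_tangent (div_pos ha hvpos) (div_pos hal hblpos)
  have hslope : (a / v - al / bl) / (al / bl * (al / bl + 1)) =
      bl ^ 2 / (al * (al + bl)) * (a / v - al / bl) := by
    field_simp
  rw [inv_div, inv_div, hslope] at htangent
  have hmono : Real.log (1 + v / a) ≤ Real.log (1 + b / a) :=
    Real.log_le_log (by positivity) (by gcongr)
  linarith
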